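/- Let φ ∈ C₀(ℝ) with φ ≠ 0. Then the sup-norm closure of N¹_φ(ℝ) equals C₀(ℝ) ⊕ ℝ·1, i.e., the set of functions of the form f + c·1 with f ∈ C₀(ℝ) and c ∈ ℝ. -/

import Mathlib

open Filter Topology MeasureTheory

noncomputable section

/-- Closure of a set of real-valued functions with respect to the supremum
norm over the whole domain (global uniform convergence). -/
def UnifClosure {α : Type*} (S : Set (α → ℝ)) : Set (α → ℝ) :=
  {f | ∀ ε : ℝ, 0 < ε → ∃ g ∈ S, ∀ x, |f x - g x| ≤ ε}

/-- `N¹_φ(ℝ)`: the linear span of the functions `x ↦ φ(a x + b)`. -/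
def N1R (φ : ℝ → ℝ) : Set (ℝ → ℝ) :=
  ↑(Submodule.span ℝ {f : ℝ → ℝ | ∃ a b : ℝ, f = fun x => φ (a * x + b)})

/-- `C₀(ℝ)`: continuous real-valued functions on `ℝ` vanishing at infinity. -/
def C0R : Set (ℝ → ℝ) :=
  {f | Continuous f ∧ Tendsto f (cocompact ℝ) (𝓝 0)}

/-! A closed affine invariant subspace `S ≠ 0` of `C₀(ℝ)` is everything. Averaging a nonzero
`f ∈ S` twice over unit windows gives a nonzero `ψ ∈ C₀(ℝ)` whose second derivative is a second
difference of `f`, so it lies in `S`; up to sign, `ψ` has a positive maximum, at `x₀` say, where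
its derivative vanishes. By Taylor's formula the integral of the affine images
`(1 - s) * ψ'' (s * x + x₀)` over `s ∈ [0, 1]` equals `(ψ (x + x₀) - ψ x₀) / x ^ 2`. This is an
element of `S` that is integrable, nonpositive and not identically zero, so its rescalings,
divided by its integral, form an approximate identity contained in `S`. Hence every integrable
function of `C₀(ℝ)` lies in `S`, and these are dense. The constants in the closure come from
`a = 0`.
-/

open scoped ZeroAtInfty

section Preliminaries

lemma integral_mem_of_isClosed {α E : Type*} [MeasurableSpace α] {μ : Measure α}
    [NormedAddCommGroup E] [NormedSpace ℝ E] [CompleteSpace E] {S : Submodule ℝ E}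
    (hS : IsClosed (S : Set E)) {F : α → E} (hF : ∀ s, F s ∈ S) : ∫ s, F s ∂μ ∈ S := by
  by_cases hint : Integrable F μ
  · have : IsClosed (S : Set E) := hS
    have hcomm := S.mkQL.integral_comp_comm hint
    have hzero : ∀ s, S.mkQL (F s) = 0 := fun s => (Submodule.Quotient.mk_eq_zero S).2 (hF s)
    simp only [hzero, integral_zero] at hcomm
    exact (Submodule.Quotient.mk_eq_zero S).1 hcomm.symm
  · rw [integral_undef hint]
    exact S.zero_mem

lemma integrable_of_norm_le_of_norm_mul_sq_le {E : Type*} [NormedAddCommGroup E] {f : ℝ → E}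
    (hf : Continuous f) {A B : ℝ} (hA : ∀ x, ‖f x‖ ≤ A) (hB : ∀ x, ‖f x‖ * x ^ 2 ≤ B) :
    Integrable f := by
  refine (integrable_inv_one_add_sq.const_mul (A + B)).mono' hf.aestronglyMeasurable
    (.of_forall fun x => ?_)
  rw [← div_eq_mul_inv, le_div_iff₀ (by positivity), mul_add, mul_one]
  exact add_le_add (hA x) (hB x)

lemma nonneg_of_mul_sq_nonneg {f : ℝ → ℝ} (hf : Continuous f) (h : ∀ x, 0 ≤ f x * x ^ 2) (x : ℝ) :
    0 ≤ f x := by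
  refine (dense_compl_singleton (0 : ℝ)).induction (P := fun x => 0 ≤ f x) (fun y hy => ?_)
    (isClosed_le continuous_const hf) x
  exact nonneg_of_mul_nonneg_left (h y) (sq_pos_of_ne_zero hy)

lemma eq_zero_of_periodic_of_tendsto_zero {E : Type*} [NormedAddCommGroup E] {f : ℝ → E} {c : ℝ}
    (hc : 0 < c) (hf : Function.Periodic f c) (hlim : Tendsto f atTop (𝓝 0)) : f = 0 := by
  funext x
  have hshift : Tendsto (fun n : ℕ => x + n * c) atTop atTop :=
    tendsto_atTop_add_const_left _ _ (tendsto_natCast_atTop_atTop.atTop_mul_const hc)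
  have hconst : ∀ n : ℕ, f (x + n * c) = f x := fun n => hf.nat_mul n x
  exact tendsto_nhds_unique (by simp [Function.comp_def, hconst])
    (hlim.comp hshift)

lemma exists_tendsto_of_forall_uniform_approx {α E : Type*} [NormedAddCommGroup E]
    [CompleteSpace E] {l : Filter α} [l.NeBot] {h : α → E}
    (happrox : ∀ ε > 0, ∃ g : α → E, (∃ c, Tendsto g l (𝓝 c)) ∧ ∀ x, ‖h x - g x‖ ≤ ε) :
    ∃ c, Tendsto h l (𝓝 c) := by
  rw [← cauchy_map_iff_exists_tendsto, Metric.cauchy_iff]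
  refine ⟨inferInstance, fun ε hε => ?_⟩
  obtain ⟨g, ⟨c, hg⟩, hhg⟩ := happrox (ε / 4) (by positivity)
  have hclose : ∀ᶠ x in l, dist (h x) c < ε / 2 := by
    filter_upwards [Metric.tendsto_nhds.1 hg (ε / 4) (by positivity)] with x hx
    have htri := dist_triangle (h x) (g x) c
    have hx' := hhg x
    rw [← dist_eq_norm] at hx'
    linarith
  refine ⟨_, image_mem_map hclose, ?_⟩
  rintro _ ⟨x, hx, rfl⟩ _ ⟨y, hy, rfl⟩
  calc dist (h x) (h y) ≤ dist (h x) c + dist (h y) c := dist_triangle_right _ _ _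
    _ < ε := by linarith [hx.out, hy.out]

end Preliminaries

section ZeroAtInfty

variable {X Y E : Type*} [TopologicalSpace X] [TopologicalSpace Y] [NormedAddCommGroup E]

lemma norm_apply_le_norm (f : C₀(X, E)) (x : X) : ‖f x‖ ≤ ‖f‖ :=
  f.toBCF.norm_coe_le_norm x

/-- Evaluation at `x`, as a continuous linear map on `C₀(X, E)`; it moves through Bochner
integrals of `C₀(X, E)`-valued functions. -/
def zeroAtInftyEvalCLM [NormedSpace ℝ E] (x : X) : C₀(X, E) →L[ℝ] E :=
  LinearMap.mkContinuous
    { toFun := fun f => f x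
      map_add' := fun _ _ => rfl
      map_smul' := fun _ _ => rfl } 1
    fun f => (norm_apply_le_norm f x).trans_eq (one_mul _).symm

lemma zeroAtInfty_integral_apply [NormedSpace ℝ E] [CompleteSpace E] {α : Type*}
    [MeasurableSpace α] {μ : Measure α} {F : α → C₀(X, E)} (hF : Integrable F μ) (x : X) :
    (∫ s, F s ∂μ) x = ∫ s, F s x ∂μ :=
  ((zeroAtInftyEvalCLM x).integral_comp_comm hF).symm

lemma exists_forall_apply_le (f : C₀(X, ℝ)) {y : X} (hy : 0 < f y) : ∃ x, ∀ z, f z ≤ f x :=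
  (map_continuous f).exists_forall_ge' y ((zero_at_infty f).eventually_le_const hy)

lemma tendstoUniformly_comp_of_tendsto_cocompact {T : Type*} [TopologicalSpace T] (f : C₀(Y, E))
    {h : T → X → Y} (hcont : Continuous (Function.uncurry h)) {t₀ : T}
    (hinf : Tendsto (Function.uncurry h) (𝓝 t₀ ×ˢ cocompact X) (cocompact Y)) :
    TendstoUniformly (fun t x => f (h t x)) (fun x => f (h t₀ x)) (𝓝 t₀) := by
  rw [Metric.tendstoUniformly_iff]
  intro ε hε
  have hsmall : ∀ᶠ p in 𝓝 t₀ ×ˢ cocompact X, ‖f (Function.uncurry h p)‖ < ε / 2 :=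
    ((zero_at_infty f).comp hinf).norm.eventually_lt_const (by simpa using half_pos hε)
  obtain ⟨P, hP, Q, hQ, hPQ⟩ := eventually_prod_iff.1 hsmall
  obtain ⟨C, hC, hCQ⟩ := mem_cocompact.1 hQ
  obtain ⟨V, hV, hVC⟩ := hC.mem_uniformity_of_prod (s := Set.univ) (q := t₀)
    (f := fun t x => f (h t x)) ((map_continuous f).comp hcont).continuousOn (Set.mem_univ _)
    (Metric.dist_mem_uniformity hε)
  rw [nhdsWithin_univ] at hV
  filter_upwards [hV, hP] with t htV htP x
  by_cases hx : x ∈ C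
  · rw [dist_comm]
    exact hVC t htV x hx
  · have h₀ : ‖f (h t₀ x)‖ < ε / 2 := hPQ hP.self_of_nhds (hCQ hx)
    have ht : ‖f (h t x)‖ < ε / 2 := hPQ htP (hCQ hx)
    calc dist (f (h t₀ x)) (f (h t x)) ≤ ‖f (h t₀ x)‖ + ‖f (h t x)‖ := dist_le_norm_add_norm _ _
      _ < ε := by linarith

lemma dense_setOf_hasCompactSupport [R1Space X] :
    Dense {g : C₀(X, ℝ) | HasCompactSupport g} := by
  refine Metric.dense_iff.2 fun f ε hε => ?_
  -- Soft thresholding at height `ε / 2` kills `f` near infinity and moves it by at most `ε / 2`.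
  let clamp : ℝ → ℝ := fun t => max (-(ε / 2)) (min t (ε / 2))
  have hsmall : ∀ᶠ x in cocompact X, |f x| < ε / 2 :=
    (zero_at_infty f).abs.eventually_lt_const (by simpa using half_pos hε)
  obtain ⟨C, hC, hCf⟩ := mem_cocompact.1 hsmall
  have hsupp : HasCompactSupport fun x => f x - clamp (f x) := by
    refine .intro hC fun x hx => ?_
    obtain ⟨hlo, hhi⟩ := abs_lt.1 (show |f x| < ε / 2 from hCf hx)
    simp only [clamp, min_eq_left hhi.le, max_eq_right hlo.le, sub_self]
  have hcont : Continuous fun x => f x - clamp (f x) := by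
    have := map_continuous f
    fun_prop
  refine ⟨⟨⟨_, hcont⟩, hsupp.is_zero_at_infty⟩, ?_, hsupp⟩
  refine lt_of_le_of_lt ((BoundedContinuousFunction.dist_le (half_pos hε).le).2 fun x => ?_)
    (half_lt_self hε)
  change |f x - clamp (f x) - f x| ≤ ε / 2
  rw [sub_sub_cancel_left, abs_neg, abs_le]
  exact ⟨le_max_left _ _, max_le (by linarith) (min_le_right _ _)⟩

end ZeroAtInfty

section AffinePrecomp

variable {E : Type*} [NormedAddCommGroup E] [NormedSpace ℝ E]

/-- The operator `f ↦ f (a · + b)` on `C₀(ℝ, E)`. For `a = 0` the function `f (a · + b)` is a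
constant, which lies outside `C₀(ℝ, E)` in general, and the operator is set to `0`. -/
def affinePrecomp (a b : ℝ) : C₀(ℝ, E) →L[ℝ] C₀(ℝ, E) :=
  if ha : a = 0 then 0 else
    (ZeroAtInftyContinuousMap.compLinearMap
      ⟨affineHomeomorph a b ha, (affineHomeomorph a b ha).isClosedEmbedding.tendsto_cocompact⟩
      ).mkContinuous 1 fun f => by
        rw [one_mul]
        exact (BoundedContinuousFunction.norm_le (norm_nonneg f)).2 fun x =>
          norm_apply_le_norm f _

lemma affinePrecomp_zero_left (b : ℝ) : affinePrecomp (E := E) 0 b = 0 :=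
  dif_pos rfl

lemma affinePrecomp_apply {a : ℝ} (ha : a ≠ 0) (b : ℝ) (f : C₀(ℝ, E)) (x : ℝ) :
    affinePrecomp a b f x = f (a * x + b) := by
  rw [affinePrecomp, dif_neg ha]
  rfl

lemma affinePrecomp_one_zero (f : C₀(ℝ, E)) : affinePrecomp 1 0 f = f := by
  ext x
  rw [affinePrecomp_apply one_ne_zero, one_mul, add_zero]

lemma affinePrecomp_affinePrecomp (a b c d : ℝ) (f : C₀(ℝ, E)) :
    affinePrecomp a b (affinePrecomp c d f) = affinePrecomp (c * a) (c * b + d) f := by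
  rcases eq_or_ne a 0 with rfl | ha
  · simp only [mul_zero, affinePrecomp_zero_left, zero_apply]
  rcases eq_or_ne c 0 with rfl | hc
  · simp only [zero_mul, affinePrecomp_zero_left, zero_apply, map_zero]
  ext x
  rw [affinePrecomp_apply ha, affinePrecomp_apply hc, affinePrecomp_apply (mul_ne_zero hc ha)]
  ring_nf

lemma norm_affinePrecomp_apply_le (a b : ℝ) (f : C₀(ℝ, E)) : ‖affinePrecomp a b f‖ ≤ ‖f‖ := by
  refine (BoundedContinuousFunction.norm_le (norm_nonneg f)).2 fun x => ?_
  change ‖affinePrecomp a b f x‖ ≤ ‖f‖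
  rcases eq_or_ne a 0 with rfl | ha
  · simp [affinePrecomp_zero_left]
  · rw [affinePrecomp_apply ha]
    exact norm_apply_le_norm f _

lemma tendsto_affine_cocompact {a₀ : ℝ} (ha₀ : a₀ ≠ 0) (b₀ : ℝ) :
    Tendsto (fun p : (ℝ × ℝ) × ℝ => p.1.1 * p.2 + p.1.2) (𝓝 (a₀, b₀) ×ˢ cocompact ℝ)
      (cocompact ℝ) := by
  rw [← Metric.cobounded_eq_cocompact, ← tendsto_norm_atTop_iff_cobounded]
  have hab : Tendsto (fun p : (ℝ × ℝ) × ℝ => p.1) (𝓝 (a₀, b₀) ×ˢ Bornology.cobounded ℝ)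
      (𝓝 (a₀, b₀)) := tendsto_fst
  have hmul : Tendsto (fun p : (ℝ × ℝ) × ℝ => |p.1.1| * |p.2|)
      (𝓝 (a₀, b₀) ×ˢ Bornology.cobounded ℝ) atTop :=
    hab.fst_nhds.abs.pos_mul_atTop (abs_pos.2 ha₀) (tendsto_norm_cobounded_atTop.comp tendsto_snd)
  refine tendsto_atTop_mono (fun p => ?_) (hmul.atTop_add hab.snd_nhds.abs.neg)
  have htri := abs_sub_abs_le_abs_sub (p.1.1 * p.2) (-p.1.2)
  rwa [abs_mul, abs_neg, sub_neg_eq_add] at htri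

lemma continuousAt_affinePrecomp (f : C₀(ℝ, E)) {a₀ : ℝ} (ha₀ : a₀ ≠ 0) (b₀ : ℝ) :
    ContinuousAt (fun p : ℝ × ℝ => affinePrecomp p.1 p.2 f) (a₀, b₀) := by
  refine ZeroAtInftyContinuousMap.tendsto_iff_tendstoUniformly.2 ?_
  have hunif : TendstoUniformly (fun (p : ℝ × ℝ) x => f (p.1 * x + p.2))
      (fun x => f (a₀ * x + b₀)) (𝓝 (a₀, b₀)) := tendstoUniformly_comp_of_tendsto_cocompact f
    (h := fun (p : ℝ × ℝ) (x : ℝ) => p.1 * x + p.2) (by fun_prop)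
    (tendsto_affine_cocompact ha₀ b₀)
  intro u hu
  filter_upwards [hunif u hu, continuousAt_fst.eventually_ne ha₀] with p hpu hp x
  simpa only [affinePrecomp_apply hp, affinePrecomp_apply ha₀] using hpu x

lemma continuous_affinePrecomp_comp {T : Type*} [TopologicalSpace T] (f : C₀(ℝ, E)) {a : ℝ}
    (ha : a ≠ 0) {b : T → ℝ} (hb : Continuous b) : Continuous fun t => affinePrecomp a (b t) f :=
  continuous_iff_continuousAt.2 fun t =>
    (continuousAt_affinePrecomp f ha (b t)).comp (f := fun t => (a, b t)) (by fun_prop)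

end AffinePrecomp

section UnitAverage

variable {E : Type*} [NormedAddCommGroup E] [NormedSpace ℝ E] [CompleteSpace E]

/-- The moving average of `f` over the window `[x, x + 1]`, used to smooth `f`; defined as an
integral of translates so that it is an element of `C₀(ℝ, E)` by construction. -/
def unitAverage (f : C₀(ℝ, E)) : C₀(ℝ, E) :=
  ∫ t in (0 : ℝ)..1, affinePrecomp 1 t f

lemma unitAverage_apply (f : C₀(ℝ, E)) (x : ℝ) : unitAverage f x = ∫ t in x..(x + 1), f t := by
  have hcont : Continuous fun t => affinePrecomp 1 t f :=
    continuous_affinePrecomp_comp f one_ne_zero continuous_id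
  calc unitAverage f x = ∫ t in (0 : ℝ)..1, affinePrecomp 1 t f x :=
        ((zeroAtInftyEvalCLM x).intervalIntegral_comp_comm (hcont.intervalIntegrable _ _)).symm
    _ = ∫ t in (0 : ℝ)..1, f (x + t) := by simp only [affinePrecomp_apply one_ne_zero, one_mul]
    _ = ∫ t in x..(x + 1), f t := by rw [intervalIntegral.integral_comp_add_left, add_zero]

lemma hasDerivAt_unitAverage (f : C₀(ℝ, E)) (x : ℝ) :
    HasDerivAt (unitAverage f) (f (x + 1) - f x) x := by
  have hf : Continuous f := map_continuous f
  have hprim : ∀ y, HasDerivAt (fun y => ∫ t in (0 : ℝ)..y, f t) (f y) y := fun y =>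
    hf.integral_hasStrictDerivAt 0 y |>.hasDerivAt
  have heq : ⇑(unitAverage f) =
      fun y => (∫ t in (0 : ℝ)..(y + 1), f t) - ∫ t in (0 : ℝ)..y, f t := by
    funext y
    rw [unitAverage_apply, intervalIntegral.integral_interval_sub_left] <;>
      exact hf.intervalIntegrable _ _
  rw [heq]
  exact ((hprim (x + 1)).comp_add_const x 1).sub (hprim x)

lemma unitAverage_ne_zero {f : C₀(ℝ, E)} (hf : f ≠ 0) : unitAverage f ≠ 0 := by
  contrapose! hf
  have hper : Function.Periodic f 1 := fun x => by
    have hderiv := hasDerivAt_unitAverage f x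
    rw [hf] at hderiv
    exact sub_eq_zero.1 (hderiv.unique (hasDerivAt_const x 0))
  have hlim : Tendsto f atTop (𝓝 0) := (zero_at_infty f).mono_left atTop_le_cocompact
  exact DFunLike.coe_injective (eq_zero_of_periodic_of_tendsto_zero one_pos hper hlim)

end UnitAverage

section TaylorKernel

variable {E : Type*} [NormedAddCommGroup E] [NormedSpace ℝ E]

/-- The function `x ↦ ∫₀¹ (1 - s) • g (x₀ + s x) ds`. When `g = ψ''` it is the second order Taylor
remainder of `ψ` at `x₀`, divided by `x ^ 2`. -/
def taylorKernel (x₀ : ℝ) (g : C₀(ℝ, E)) : C₀(ℝ, E) :=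
  ∫ s in Set.Ioc (0 : ℝ) 1, (1 - s) • affinePrecomp s x₀ g

lemma integrableOn_smul_affinePrecomp (x₀ : ℝ) (g : C₀(ℝ, E)) :
    IntegrableOn (fun s : ℝ => (1 - s) • affinePrecomp s x₀ g) (Set.Ioc 0 1) := by
  have hcont : ContinuousOn (fun s : ℝ => (1 - s) • affinePrecomp s x₀ g) (Set.Ioc 0 1) := by
    intro s hs
    refine ContinuousAt.continuousWithinAt (.smul (continuousAt_const.sub continuousAt_id) ?_)
    exact (continuousAt_affinePrecomp g hs.1.ne' x₀).comp (f := fun s => (s, x₀)) (by fun_prop)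
  refine Integrable.of_bound (hcont.aestronglyMeasurable measurableSet_Ioc) ‖g‖
    (ae_restrict_of_forall_mem measurableSet_Ioc fun s hs => ?_)
  have hs' : ‖1 - s‖ ≤ 1 := by
    rw [Real.norm_eq_abs, abs_le]
    constructor <;> linarith [hs.1, hs.2]
  calc ‖(1 - s) • affinePrecomp s x₀ g‖ ≤ ‖1 - s‖ * ‖affinePrecomp s x₀ g‖ := norm_smul_le _ _
    _ ≤ 1 * ‖g‖ := by gcongr; exact norm_affinePrecomp_apply_le s x₀ g
    _ = ‖g‖ := one_mul _

variable [CompleteSpace E]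

lemma taylorKernel_apply (x₀ : ℝ) (g : C₀(ℝ, E)) (x : ℝ) :
    taylorKernel x₀ g x = ∫ s in (0 : ℝ)..1, (1 - s) • g (s * x + x₀) := by
  rw [taylorKernel, zeroAtInfty_integral_apply (integrableOn_smul_affinePrecomp x₀ g),
    intervalIntegral.integral_of_le zero_le_one]
  refine setIntegral_congr_fun measurableSet_Ioc fun s hs => ?_
  simp only [ZeroAtInftyContinuousMap.smul_apply, affinePrecomp_apply hs.1.ne']

variable {ψ ψ₁ ψ₂ : C₀(ℝ, E)}

lemma sq_smul_taylorKernel (hψ : ∀ x, HasDerivAt ψ (ψ₁ x) x) (hψ₁ : ∀ x, HasDerivAt ψ₁ (ψ₂ x) x)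
    (x₀ x : ℝ) : x ^ 2 • taylorKernel x₀ ψ₂ x = ψ (x + x₀) - ψ x₀ - x • ψ₁ x₀ := by
  have hline : ∀ s : ℝ, HasDerivAt (fun s => s * x + x₀) x s := fun s => by
    simpa using ((hasDerivAt_id s).mul_const x).add_const x₀
  have hprim : ∀ s : ℝ, HasDerivAt
      (fun s => ((1 - s) * x) • ψ₁ (s * x + x₀) + ψ (s * x + x₀))
      (x ^ 2 • (1 - s) • ψ₂ (s * x + x₀)) s := fun s => by
    have hcoef : HasDerivAt (fun s : ℝ => (1 - s) * x) (-x) s := by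
      simpa using ((hasDerivAt_id s).const_sub 1).mul_const x
    refine ((hcoef.smul ((hψ₁ _).scomp s (hline s))).add ((hψ _).scomp s (hline s))).congr_deriv ?_
    simp only [Function.comp_apply]
    module
  have hint : IntervalIntegrable (fun s : ℝ => x ^ 2 • (1 - s) • ψ₂ (s * x + x₀)) volume 0 1 := by
    have := map_continuous ψ₂
    exact Continuous.intervalIntegrable (by fun_prop) _ _
  rw [taylorKernel_apply, ← intervalIntegral.integral_smul,
    intervalIntegral.integral_eq_sub_of_hasDerivAt (fun s _ => hprim s) hint]
  simp only [sub_self, zero_mul, zero_smul, zero_add, one_mul, sub_zero]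
  abel

lemma integrable_taylorKernel (hψ : ∀ x, HasDerivAt ψ (ψ₁ x) x)
    (hψ₁ : ∀ x, HasDerivAt ψ₁ (ψ₂ x) x) {x₀ : ℝ} (hx₀ : ψ₁ x₀ = 0) :
    Integrable (taylorKernel x₀ ψ₂) := by
  refine integrable_of_norm_le_of_norm_mul_sq_le (map_continuous _)
    (norm_apply_le_norm (taylorKernel x₀ ψ₂)) (B := ‖ψ‖ + ‖ψ‖) fun x => ?_
  calc ‖taylorKernel x₀ ψ₂ x‖ * x ^ 2 = ‖x ^ 2 • taylorKernel x₀ ψ₂ x‖ := by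
        rw [norm_smul, Real.norm_of_nonneg (sq_nonneg x), mul_comm]
    _ = ‖ψ (x + x₀) - ψ x₀‖ := by
        rw [sq_smul_taylorKernel hψ hψ₁, hx₀, smul_zero, sub_zero]
    _ ≤ ‖ψ‖ + ‖ψ‖ := norm_sub_le_of_le (norm_apply_le_norm ψ _) (norm_apply_le_norm ψ _)

lemma integral_taylorKernel_neg {ψ ψ₁ ψ₂ : C₀(ℝ, ℝ)} (hψ : ∀ x, HasDerivAt ψ (ψ₁ x) x)
    (hψ₁ : ∀ x, HasDerivAt ψ₁ (ψ₂ x) x) {x₀ : ℝ} (hmax : ∀ x, ψ x ≤ ψ x₀) (hpos : 0 < ψ x₀) :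
    ∫ x, taylorKernel x₀ ψ₂ x < 0 := by
  have hcrit : ψ₁ x₀ = 0 :=
    IsLocalMax.hasDerivAt_eq_zero (.of_forall hmax) (hψ x₀)
  have hsq : ∀ x, -taylorKernel x₀ ψ₂ x * x ^ 2 = ψ x₀ - ψ (x + x₀) := fun x => by
    have htaylor := sq_smul_taylorKernel hψ hψ₁ x₀ x
    rw [hcrit, smul_zero, sub_zero, smul_eq_mul] at htaylor
    linarith
  have hcont : Continuous fun x => -taylorKernel x₀ ψ₂ x := (map_continuous _).neg
  obtain ⟨y, hy⟩ : ∃ y, ψ y < ψ x₀ :=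
    ((zero_at_infty ψ).eventually_lt_const hpos).exists
  rw [← neg_pos, ← integral_neg]
  refine integral_pos_of_integrable_nonneg_nonzero (x := y - x₀) hcont
    (integrable_taylorKernel hψ hψ₁ hcrit).neg
    (nonneg_of_mul_sq_nonneg hcont fun x => by rw [hsq]; linarith [hmax (x + x₀)]) fun hzero => ?_
  have := hsq (y - x₀)
  rw [hzero, zero_mul, sub_add_cancel] at this
  linarith

end TaylorKernel

section ApproximateIdentity

variable {E : Type*} [NormedAddCommGroup E] [NormedSpace ℝ E]

lemma integrable_smul_affinePrecomp {K : ℝ → ℝ} (hK : Integrable K) (f : C₀(ℝ, E)) {a : ℝ}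
    (ha : a ≠ 0) {b : ℝ → ℝ} (hb : Continuous b) :
    Integrable fun u => K u • affinePrecomp a (b u) f :=
  hK.smul_bdd ‖f‖ (continuous_affinePrecomp_comp f ha hb).aestronglyMeasurable
    (.of_forall fun u => norm_affinePrecomp_apply_le a (b u) f)

variable [CompleteSpace E]

lemma tendsto_integral_smul_affinePrecomp {K : ℝ → ℝ} (hK : Integrable K) (f : C₀(ℝ, E)) :
    Tendsto (fun r : ℝ => ∫ u, K u • affinePrecomp 1 (-(u / r)) f) atTop
      (𝓝 ((∫ u, K u) • f)) := by
  rw [← integral_smul_const]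
  refine tendsto_integral_filter_of_dominated_convergence (fun u => ‖K u‖ * ‖f‖)
    (.of_forall fun r => ?_) (.of_forall fun r => .of_forall fun u => ?_) (hK.norm.mul_const _)
    (.of_forall fun u => ?_)
  · exact (integrable_smul_affinePrecomp hK f one_ne_zero (by fun_prop)).aestronglyMeasurable
  · rw [norm_smul]
    gcongr
    exact norm_affinePrecomp_apply_le 1 _ f
  · have hshift : Tendsto (fun r : ℝ => -(u / r)) atTop (𝓝 0) := by
      have hdiv : Tendsto (fun r : ℝ => u / r) atTop (𝓝 0) :=
        tendsto_const_nhds.div_atTop tendsto_id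
      simpa only [neg_zero] using hdiv.neg
    have hcont := (continuous_affinePrecomp_comp f one_ne_zero continuous_id).tendsto 0
    rw [id, affinePrecomp_one_zero] at hcont
    exact (hcont.comp hshift).const_smul (K u)

lemma integral_smul_affinePrecomp_rescale {K f : C₀(ℝ, ℝ)} (hK : Integrable K) (hf : Integrable f)
    {r : ℝ} (hr : 0 < r) :
    ∫ y, f y • affinePrecomp r (-(r * y)) K = r⁻¹ • ∫ u, K u • affinePrecomp 1 (-(u / r)) f := by
  ext x
  rw [ZeroAtInftyContinuousMap.smul_apply,
    zeroAtInfty_integral_apply (integrable_smul_affinePrecomp hf K hr.ne' (by fun_prop)),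
    zeroAtInfty_integral_apply (integrable_smul_affinePrecomp hK f one_ne_zero (by fun_prop))]
  simp only [ZeroAtInftyContinuousMap.smul_apply, affinePrecomp_apply hr.ne',
    affinePrecomp_apply one_ne_zero, smul_eq_mul]
  calc ∫ y, f y * K (r * x + -(r * y))
      = ∫ z, f (x - z) * K (r * z) := by
        rw [← integral_sub_left_eq_self (fun z => f (x - z) * K (r * z)) volume x]
        simp only [sub_sub_cancel, mul_sub, ← sub_eq_add_neg]
    _ = ∫ z, (fun u => K u * f (1 * x + -(u / r))) (r * z) := by
        congr! 2 with z
        simp only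
        rw [mul_comm, mul_div_cancel_left₀ _ hr.ne', one_mul, sub_eq_add_neg]
    _ = r⁻¹ * ∫ u, K u * f (1 * x + -(u / r)) := by
        rw [Measure.integral_comp_mul_left (fun u => K u * f (1 * x + -(u / r))),
          abs_of_pos (inv_pos.2 hr), smul_eq_mul]

end ApproximateIdentity

/-- A subspace of `C₀(ℝ, ℝ)` is affine invariant if it contains `f (a · + b)` along with `f`, for
all `a ≠ 0` and `b`; the value `a = 0` imposes no condition, as `affinePrecomp 0 b = 0`. -/
def IsAffineInvariant (S : Submodule ℝ C₀(ℝ, ℝ)) : Prop :=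
  ∀ a b, ∀ f ∈ S, affinePrecomp a b f ∈ S

namespace IsAffineInvariant

variable {S : Submodule ℝ C₀(ℝ, ℝ)}

lemma span_range_affinePrecomp (φ : C₀(ℝ, ℝ)) :
    IsAffineInvariant (.span ℝ (Set.range fun p : ℝ × ℝ => affinePrecomp p.1 p.2 φ)) := by
  intro a b f hf
  induction hf using Submodule.span_induction with
  | mem g hg =>
    obtain ⟨⟨c, d⟩, rfl⟩ := hg
    exact Submodule.subset_span ⟨(c * a, c * b + d), (affinePrecomp_affinePrecomp a b c d φ).symm⟩
  | zero => rw [map_zero]; exact Submodule.zero_mem _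
  | add f g _ _ hf hg => rw [map_add]; exact Submodule.add_mem _ hf hg
  | smul c f _ hf => rw [map_smul]; exact Submodule.smul_mem _ c hf

lemma topologicalClosure (hS : IsAffineInvariant S) : IsAffineInvariant S.topologicalClosure :=
  fun a b _ hf => map_mem_closure (affinePrecomp a b).continuous hf (hS a b)

lemma exists_secondDeriv_mem (hS : IsAffineInvariant S) (hne : S ≠ ⊥) :
    ∃ ψ ψ₁ ψ₂ : C₀(ℝ, ℝ), ψ₂ ∈ S ∧ (∃ x, 0 < ψ x) ∧
      (∀ x, HasDerivAt ψ (ψ₁ x) x) ∧ ∀ x, HasDerivAt ψ₁ (ψ₂ x) x := by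
  obtain ⟨f, hfS, hf⟩ := S.exists_mem_ne_zero_of_ne_bot hne
  let Δ : C₀(ℝ, ℝ) →L[ℝ] C₀(ℝ, ℝ) := affinePrecomp 1 1 - .id ℝ _
  have hΔ : ∀ g : C₀(ℝ, ℝ), ⇑(Δ g) = fun x => g (x + 1) - g x := fun g => by
    funext x
    change affinePrecomp 1 1 g x - g x = _
    rw [affinePrecomp_apply one_ne_zero, one_mul]
  have hΔS : ∀ g ∈ S, Δ g ∈ S := fun g hg => S.sub_mem (hS 1 1 g hg) hg
  have hderiv : ∀ g x, HasDerivAt (unitAverage g) (Δ g x) x := fun g x => by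
    rw [hΔ]
    exact hasDerivAt_unitAverage g x
  have hderivΔ : ∀ g x, HasDerivAt (Δ (unitAverage g)) (Δ (Δ g) x) x := fun g x => by
    rw [hΔ (unitAverage g), hΔ (Δ g)]
    exact ((hderiv g (x + 1)).comp_add_const x 1).sub (hderiv g x)
  let F := unitAverage (unitAverage f)
  obtain ⟨y, hy⟩ : ∃ y, F y ≠ 0 :=
    DFunLike.ne_iff.1 (unitAverage_ne_zero (unitAverage_ne_zero hf))
  refine ⟨F y • F, F y • Δ (unitAverage f), F y • Δ (Δ f), S.smul_mem _ (hΔS _ (hΔS _ hfS)),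
    ⟨y, mul_self_pos.2 hy⟩, fun x => (hderiv (unitAverage f) x).const_smul (F y),
    fun x => (hderivΔ f x).const_smul (F y)⟩

lemma taylorKernel_mem (hS : IsAffineInvariant S) (hclosed : IsClosed (S : Set C₀(ℝ, ℝ)))
    (x₀ : ℝ) {g : C₀(ℝ, ℝ)} (hg : g ∈ S) : taylorKernel x₀ g ∈ S :=
  integral_mem_of_isClosed hclosed fun s => S.smul_mem _ (hS s x₀ g hg)

lemma exists_integrable_mem (hS : IsAffineInvariant S) (hclosed : IsClosed (S : Set C₀(ℝ, ℝ)))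
    (hne : S ≠ ⊥) : ∃ K ∈ S, Integrable K ∧ ∫ x, K x ≠ 0 := by
  obtain ⟨ψ, ψ₁, ψ₂, hψ₂S, ⟨y, hy⟩, hψ, hψ₁⟩ := hS.exists_secondDeriv_mem hne
  obtain ⟨x₀, hmax⟩ := exists_forall_apply_le ψ hy
  have hcrit : ψ₁ x₀ = 0 := IsLocalMax.hasDerivAt_eq_zero (.of_forall hmax) (hψ x₀)
  exact ⟨taylorKernel x₀ ψ₂, hS.taylorKernel_mem hclosed x₀ hψ₂S,
    integrable_taylorKernel hψ hψ₁ hcrit,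
    (integral_taylorKernel_neg hψ hψ₁ hmax (hy.trans_le (hmax y))).ne⟩

lemma mem_of_integrable (hS : IsAffineInvariant S) (hclosed : IsClosed (S : Set C₀(ℝ, ℝ)))
    {K : C₀(ℝ, ℝ)} (hKS : K ∈ S) (hK : Integrable K) (hK₀ : ∫ x, K x ≠ 0) {f : C₀(ℝ, ℝ)}
    (hf : Integrable f) : f ∈ S := by
  have hmem : ∀ r > 0, ∫ u, K u • affinePrecomp 1 (-(u / r)) f ∈ S := fun r hr => by
    have hrescaled : ∫ y, f y • affinePrecomp r (-(r * y)) K ∈ S :=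
      integral_mem_of_isClosed hclosed fun y => S.smul_mem _ (hS _ _ _ hKS)
    rw [integral_smul_affinePrecomp_rescale hK hf hr] at hrescaled
    exact (S.smul_mem_iff (inv_ne_zero hr.ne')).1 hrescaled
  have hlim : (∫ x, K x) • f ∈ S := hclosed.mem_of_tendsto
    (tendsto_integral_smul_affinePrecomp hK f) ((eventually_gt_atTop 0).mono hmem)
  exact (S.smul_mem_iff hK₀).1 hlim

theorem eq_top (hS : IsAffineInvariant S) (hclosed : IsClosed (S : Set C₀(ℝ, ℝ)))
    (hne : S ≠ ⊥) : S = ⊤ := by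
  obtain ⟨K, hKS, hK, hK₀⟩ := hS.exists_integrable_mem hclosed hne
  have hdense : Dense (S : Set C₀(ℝ, ℝ)) :=
    (dense_setOf_hasCompactSupport (X := ℝ)).mono fun f hf =>
      hS.mem_of_integrable hclosed hKS hK hK₀
        ((map_continuous f).integrable_of_hasCompactSupport hf)
  exact SetLike.coe_injective (hclosed.closure_eq.symm.trans hdense.closure_eq)

end IsAffineInvariant

theorem dense_span_range_affinePrecomp {φ : C₀(ℝ, ℝ)} (hφ : φ ≠ 0) :
    Dense (Submodule.span ℝ (Set.range fun p : ℝ × ℝ => affinePrecomp p.1 p.2 φ) :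
      Set C₀(ℝ, ℝ)) := by
  rw [Submodule.dense_iff_topologicalClosure_eq_top]
  refine (IsAffineInvariant.span_range_affinePrecomp φ).topologicalClosure.eq_top
    (Submodule.isClosed_topologicalClosure _) (Submodule.ne_bot_iff _ |>.2 ⟨φ, ?_, hφ⟩)
  exact Submodule.le_topologicalClosure _
    (Submodule.subset_span ⟨(1, 0), affinePrecomp_one_zero φ⟩)

section UnifClosure

variable {α : Type*}

lemma continuous_of_mem_unifClosure [TopologicalSpace α] {S : Set (α → ℝ)}
    (hS : ∀ g ∈ S, Continuous g) {h : α → ℝ} (hh : h ∈ UnifClosure S) : Continuous h := by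
  refine continuous_of_uniform_approx_of_continuous fun u hu => ?_
  obtain ⟨ε, hε, hεu⟩ := Metric.mem_uniformity_dist.1 hu
  obtain ⟨g, hg, hhg⟩ := hh (ε / 2) (half_pos hε)
  exact ⟨g, hS g hg, fun x => hεu ((hhg x).trans_lt (half_lt_self hε))⟩

lemma exists_tendsto_of_mem_unifClosure {l : Filter α} [l.NeBot] {S : Set (α → ℝ)}
    (hS : ∀ g ∈ S, ∃ c, Tendsto g l (𝓝 c)) {h : α → ℝ} (hh : h ∈ UnifClosure S) :
    ∃ c, Tendsto h l (𝓝 c) := by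
  refine exists_tendsto_of_forall_uniform_approx fun ε hε => ?_
  obtain ⟨g, hg, hhg⟩ := hh ε hε
  exact ⟨g, hS g hg, hhg⟩

lemma add_mem_unifClosure {S : Submodule ℝ (α → ℝ)} {f g : α → ℝ}
    (hf : f ∈ UnifClosure (S : Set (α → ℝ))) (hg : g ∈ S) :
    f + g ∈ UnifClosure (S : Set (α → ℝ)) := by
  intro ε hε
  obtain ⟨f', hf', hff'⟩ := hf ε hε
  refine ⟨f' + g, S.add_mem hf' hg, fun x => ?_⟩
  simpa only [Pi.add_apply, add_sub_add_right_eq_sub] using hff' x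

end UnifClosure

section N1R

variable {φ : ℝ → ℝ}

lemma continuous_of_mem_N1R (hφ : Continuous φ) {g : ℝ → ℝ} (hg : g ∈ N1R φ) : Continuous g := by
  induction hg using Submodule.span_induction with
  | mem g hg =>
    obtain ⟨a, b, rfl⟩ := hg
    fun_prop
  | zero => exact continuous_zero
  | add f g _ _ hf hg => exact hf.add hg
  | smul c f _ hf => exact hf.const_smul c

lemma exists_tendsto_of_mem_N1R {d : ℝ} (hφ : Tendsto φ (cocompact ℝ) (𝓝 d)) {g : ℝ → ℝ}
    (hg : g ∈ N1R φ) : ∃ c, Tendsto g (cocompact ℝ) (𝓝 c) := by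
  induction hg using Submodule.span_induction with
  | mem g hg =>
    obtain ⟨a, b, rfl⟩ := hg
    rcases eq_or_ne a 0 with rfl | ha
    · simpa only [zero_mul] using ⟨φ (0 + b), tendsto_const_nhds⟩
    · exact ⟨d, hφ.comp (affineHomeomorph a b ha).isClosedEmbedding.tendsto_cocompact⟩
  | zero => exact ⟨0, tendsto_const_nhds⟩
  | add f g _ _ hf hg => exact ⟨_, hf.choose_spec.add hg.choose_spec⟩
  | smul c f _ hf => exact ⟨_, hf.choose_spec.const_smul c⟩

lemma const_mem_N1R (hφ : φ ≠ 0) (c : ℝ) : (fun _ => c) ∈ N1R φ := by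
  obtain ⟨b, hb⟩ : ∃ b, φ b ≠ 0 := Function.ne_iff.1 hφ
  have hconst : (fun x => φ (0 * x + b)) ∈ N1R φ := Submodule.subset_span ⟨0, b, rfl⟩
  have heq : (fun _ => c) = (c / φ b) • fun x => φ (0 * x + b) := by
    funext x
    simp only [zero_mul, zero_add, Pi.smul_apply, smul_eq_mul, div_mul_cancel₀ _ hb]
  rw [heq]
  exact Submodule.smul_mem _ _ hconst

lemma coe_mem_N1R_of_mem_span {φ f : C₀(ℝ, ℝ)}
    (hf : f ∈ Submodule.span ℝ (Set.range fun p : ℝ × ℝ => affinePrecomp p.1 p.2 φ)) :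
    ⇑f ∈ N1R φ := by
  induction hf using Submodule.span_induction with
  | mem g hg =>
    obtain ⟨⟨a, b⟩, rfl⟩ := hg
    rcases eq_or_ne a 0 with rfl | ha
    · simp only [affinePrecomp_zero_left]
      exact Submodule.zero_mem _
    · exact Submodule.subset_span ⟨a, b, funext (affinePrecomp_apply ha b φ)⟩
  | zero => exact Submodule.zero_mem _
  | add f g _ _ hf hg => exact Submodule.add_mem _ hf hg
  | smul c f _ hf => exact Submodule.smul_mem _ c hf

lemma coe_mem_unifClosure_N1R {φ : C₀(ℝ, ℝ)} (hφ : φ ≠ 0) (f : C₀(ℝ, ℝ)) :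
    ⇑f ∈ UnifClosure (N1R φ) := by
  intro ε hε
  obtain ⟨g, hg, hfg⟩ := (dense_span_range_affinePrecomp hφ).exists_dist_lt f hε
  refine ⟨g, coe_mem_N1R_of_mem_span hg, fun x => ?_⟩
  calc |f x - g x| ≤ ‖f - g‖ := norm_apply_le_norm (f - g) x
    _ ≤ ε := by rw [← dist_eq_norm]; exact hfg.le

lemma exists_mem_C0R_eq_add_const {h : ℝ → ℝ} (hcont : Continuous h) {c : ℝ}
    (hlim : Tendsto h (cocompact ℝ) (𝓝 c)) : ∃ f ∈ C0R, ∃ c : ℝ, h = fun x => f x + c :=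
  ⟨fun x => h x - c, ⟨hcont.sub continuous_const, tendsto_sub_nhds_zero_iff.2 hlim⟩, c, by simp⟩

end N1R

/-- For nonzero `φ ∈ C₀(ℝ)`, the uniform closure of `N¹_φ(ℝ)` is
`C₀(ℝ) ⊕ ℝ·1`. -/
theorem stmt5 (φ : ℝ → ℝ) (hφ : φ ∈ C0R) (hφ0 : φ ≠ 0) :
    UnifClosure (N1R φ) = {h : ℝ → ℝ | ∃ f ∈ C0R, ∃ c : ℝ, h = fun x => f x + c} := by
  refine Set.Subset.antisymm (fun h hh => ?_) ?_
  · have hcont : Continuous h :=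
      continuous_of_mem_unifClosure (fun _ => continuous_of_mem_N1R hφ.1) hh
    obtain ⟨c, hlim⟩ : ∃ c, Tendsto h (cocompact ℝ) (𝓝 c) :=
      exists_tendsto_of_mem_unifClosure (fun _ => exists_tendsto_of_mem_N1R hφ.2) hh
    exact exists_mem_C0R_eq_add_const hcont hlim
  · rintro _ ⟨f, hf, c, rfl⟩
    let φ₀ : C₀(ℝ, ℝ) := ⟨⟨φ, hφ.1⟩, hφ.2⟩
    let f₀ : C₀(ℝ, ℝ) := ⟨⟨f, hf.1⟩, hf.2⟩
    have hφ₀ : φ₀ ≠ 0 := fun h => hφ0 (congrArg DFunLike.coe h)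
    have hf₀ : f ∈ UnifClosure (N1R φ) := coe_mem_unifClosure_N1R hφ₀ f₀
    exact add_mem_unifClosure hf₀ (const_mem_N1R hφ0 c)
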